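/- Approval-IRV respects cohesive majorities: for every profile P of weak orders and every set of voters S ⊆ N with |S| > n/2 such that ⋂_{i∈S} topᵢ ≠ ∅, every Approval-IRV winner lies in ⋃_{i∈S} topᵢ. -/

import Mathlib

/-!
Let `c` be a candidate that all members of the majority `S` rank on top. Follow any run of the
elimination process. If `c` survives to the end, the winner is `c`, a top candidate of every member
of `S`. Otherwise `c` is eliminated at some point, so it has the lowest score among the remaining
candidates. A remaining candidate that is a top candidate of no member of `S` would be strictly
below `c` for every member of `S`, hence would score at most `n - |S|`, while `c` would score at
least `|S| > n - |S|` (`totalScore_lt_of_majority`). So at that point every remaining candidate,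
in particular the eventual winner, is a top candidate of some member of `S`
(`winnersAux_subset_tops`).

The scoring system gives no points for an order with a single indifference class. This is harmless,
because the comparison only involves members of `S` who strictly prefer `c` to the other candidate.
-/

open Finset

attribute [local instance] Classical.propDecidable

/-- A weak order on a candidate type `C`: a complete and transitive binary relation. -/
structure WeakOrder (C : Type*) where
  rel : C → C → Prop
  total : ∀ a b, rel a b ∨ rel b a
  trans : ∀ a b c, rel a b → rel b c → rel a c

namespace WeakOrder

variable {C : Type*}

/-- Strict preference. -/
def strict (w : WeakOrder C) (a b : C) : Prop :=
  w.rel a b ∧ ¬ w.rel b a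

/-- Indifference. -/
def indiff (w : WeakOrder C) (a b : C) : Prop :=
  w.rel a b ∧ w.rel b a

/-- The set of top-ranked candidates of `w` within the candidate set `A`. -/
noncomputable def topSet (w : WeakOrder C) (A : Finset C) : Finset C :=
  A.filter fun c => ∀ d ∈ A, w.rel c d

variable [DecidableEq C]

/-- Number of candidates in `A` strictly preferred to `a`. -/
noncomputable def cardAbove (w : WeakOrder C) (A : Finset C) (a : C) : ℕ :=
  (A.filter fun b => w.strict b a).card

/-- The (0-based) index of the indifference class of `a` within `A`
(0 = top indifference class). -/
noncomputable def classIdx (w : WeakOrder C) (A : Finset C) (a : C) : ℕ :=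
  ((A.filter fun b => w.strict b a).image (w.cardAbove A)).card

/-- The number of indifference classes of `w` on `A`. -/
noncomputable def numClasses (w : WeakOrder C) (A : Finset C) : ℕ :=
  (A.image (w.cardAbove A)).card

/-- The order type of `w` on `A`: the list of sizes of its indifference classes,
from the top class downwards. -/
noncomputable def orderType (w : WeakOrder C) (A : Finset C) : List ℕ :=
  (List.range (w.numClasses A)).map fun j => (A.filter fun a => w.classIdx A a = j).card

end WeakOrder

/-- Weak order induced by a rank function (smaller rank = more preferred). -/
def ofRank {C : Type*} (ρ : C → ℕ) : WeakOrder C where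
  rel a b := ρ a ≤ ρ b
  total a b := le_total _ _
  trans _ _ _ hab hbc := le_trans hab hbc

section Rules

variable {C N : Type*} [DecidableEq C] [Fintype N]

/-- The score of candidate `a` in profile `P` on remaining candidate set `A`,
under the scoring system `s` (which maps an order type and a 0-based class index
to a real score). -/
noncomputable def totalScore (s : List ℕ → ℕ → ℝ) (P : N → WeakOrder C)
    (A : Finset C) (a : C) : ℝ :=
  ∑ i : N, s ((P i).orderType A) ((P i).classIdx A a)

/-- The set of lowest-scoring candidates in `A`. -/
noncomputable def lowest (s : List ℕ → ℕ → ℝ) (P : N → WeakOrder C)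
    (A : Finset C) : Finset C :=
  A.filter fun c => ∀ d ∈ A, totalScore s P A c ≤ totalScore s P A d

/-- Fuel-based helper for the elimination scoring rule. -/
noncomputable def winnersAux (s : List ℕ → ℕ → ℝ) (P : N → WeakOrder C) :
    ℕ → Finset C → Finset C
  | 0, A => A
  | n + 1, A =>
    if A.card ≤ 1 then A
    else (lowest s P A).biUnion fun c => winnersAux s P n (A.erase c)

/-- The elimination scoring rule associated with scoring system `s`: repeatedly
eliminate a lowest-scoring candidate (parallel-universe tie-breaking) until one
candidate remains. -/
noncomputable def winners (s : List ℕ → ℕ → ℝ) (P : N → WeakOrder C)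
    (A : Finset C) : Finset C :=
  winnersAux s P A.card A

/-- Approval score: the number of voters ranking `c` in their top indifference
class within `A`. -/
noncomputable def approvalScore (P : N → WeakOrder C) (A : Finset C) (c : C) : ℕ :=
  (Finset.univ.filter fun i => c ∈ (P i).topSet A).card

end Rules

/-- The approval scoring system: `s(τ) = (1,0,…,0)` for every order type `τ`
(with `s(τ) = (0)` when `|τ| = 1`). -/
noncomputable def approvalScoring : List ℕ → ℕ → ℝ :=
  fun τ j => if j = 0 ∧ 2 ≤ τ.length then 1 else 0

/-- The split scoring system: `s(τ) = (1/τ(1),0,…,0)` for every order type `τ`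
(with `s(τ) = (0)` when `|τ| = 1`). -/
noncomputable def splitScoring : List ℕ → ℕ → ℝ :=
  fun τ j => if j = 0 ∧ 2 ≤ τ.length then ((τ.headI : ℝ))⁻¹ else 0

/-- The Borda-style scoring system:
`s(τ) = (m−1, m−1−τ(1), …, m−1−∑_{i<k−1} τ(i))` where `m = τ.sum`. -/
noncomputable def bordaScoring : List ℕ → ℕ → ℝ :=
  fun τ j => ((τ.sum : ℝ) - 1) - (((τ.take j).sum : ℕ) : ℝ)

/-- Nonnegativity of a scoring system. -/
def NonnegSys (s : List ℕ → ℕ → ℝ) : Prop := ∀ τ j, 0 ≤ s τ j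

/-- The last score value of every (nonempty) order type is zero. -/
def LastZeroSys (s : List ℕ → ℕ → ℝ) : Prop :=
  ∀ τ : List ℕ, τ ≠ [] → s τ (τ.length - 1) = 0

/-- Monotonicity of a scoring system: earlier indifference classes get weakly
higher scores. -/
def MonotoneSys (s : List ℕ → ℕ → ℝ) : Prop :=
  ∀ τ i j, i ≤ j → s τ j ≤ s τ i

section CloneHoverEtc

variable {C N : Type*}

/-- `X` is a clone set in the profile `P` relative to ambient candidate set `A`. -/
def IsCloneSet (P : N → WeakOrder C) (A X : Finset C) : Prop :=
  X ⊆ A ∧ ∀ i : N, ∀ c ∈ A, c ∉ X →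
    (∀ x ∈ X, (P i).strict x c) ∨ (∀ x ∈ X, (P i).indiff x c) ∨
      (∀ x ∈ X, (P i).strict c x)

/-- `w2` is obtained from `w` by a `c`-hover: `c` is alone in its (non-top)
indifference class in `w`, and in `w2` it is merged into the indifference class
directly above it, everything else being unchanged. -/
def IsCHover (w w2 : WeakOrder C) (c : C) : Prop :=
  (∀ x, x ≠ c → ¬ w.indiff c x) ∧
  (∃ b, w.strict b c) ∧
  (∀ a b, a ≠ c → (w2.rel a b ↔ w.rel a b)) ∧
  (∀ b, w2.rel c b ↔ (w.rel c b ∨ ((w.strict b c) ∧ ∀ y, w.strict y c → w.rel b y)))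

/-- The sincere coarsening of `w` merging all candidates strictly preferred to
`b` into a single top indifference class, leaving the rest unchanged. -/
def mergeAbove (w : WeakOrder C) (b : C) : WeakOrder C where
  rel u v := w.strict u b ∨ (¬ w.strict v b ∧ w.rel u v)
  total u v := by
    by_cases hu : w.strict u b
    · exact Or.inl (Or.inl hu)
    · by_cases hv : w.strict v b
      · exact Or.inr (Or.inl hv)
      · rcases w.total u v with h | h
        · exact Or.inl (Or.inr ⟨hv, h⟩)
        · exact Or.inr (Or.inr ⟨hu, h⟩)
  trans u v x huv hvx := by
    rcases huv with h | ⟨hv, huv⟩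
    · exact Or.inl h
    · rcases hvx with h | ⟨hx, hvx⟩
      · exact absurd h hv
      · exact Or.inr ⟨hx, w.trans _ _ _ huv hvx⟩

/-- Pairwise majority margin of `a` over `b`. -/
noncomputable def margin [Fintype N] (P : N → WeakOrder C) (a b : C) : ℤ :=
  ((Finset.univ.filter fun i => (P i).strict a b).card : ℤ) -
    ((Finset.univ.filter fun i => (P i).strict b a).card : ℤ)

end CloneHoverEtc

section STV

variable {C N : Type*} [DecidableEq C] [Fintype C] [Fintype N]

/-- The supporters of `c` among remaining candidates `R`: voters with `c` in
their top indifference class within `R`. -/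
noncomputable def suppSet (P : N → WeakOrder C) (R : Finset C) (c : C) : Finset N :=
  Finset.univ.filter fun i => ∀ d ∈ R, (P i).rel c d

/-- A state of the Approval-STV computation: remaining candidates, selected
candidates, and the budget of each voter. -/
structure STVState (C N : Type*) where
  R : Finset C
  W : Finset C
  b : N → ℝ

/-- One step of Approval-STV with quota `q`: either select an eligible candidate
(whose supporters hold strictly more than `q` budget), charging its supporters a
total of exactly `q`, or, if no candidate is eligible, eliminate some candidate. -/
inductive STVStep (P : N → WeakOrder C) (q : ℝ) : STVState C N → STVState C N → Prop
  | select (R W : Finset C) (b b' : N → ℝ) (c : C) (hc : c ∈ R)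
      (helig : q < ∑ i ∈ suppSet P R c, b i)
      (hpay : ∀ i ∉ suppSet P R c, b' i = b i)
      (hdec : ∀ i : N, b' i ≤ b i)
      (hnn : ∀ i : N, 0 ≤ b' i)
      (htot : ∑ i ∈ suppSet P R c, b' i = (∑ i ∈ suppSet P R c, b i) - q) :
      STVStep P q ⟨R, W, b⟩ ⟨R.erase c, insert c W, b'⟩
  | eliminate (R W : Finset C) (b : N → ℝ) (c : C) (hc : c ∈ R)
      (hnone : ∀ c' ∈ R, (∑ i ∈ suppSet P R c', b i) ≤ q) :
      STVStep P q ⟨R, W, b⟩ ⟨R.erase c, W, b⟩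

/-- `W` is a possible outcome of an execution of Approval-STV with quota `q`:
starting from all candidates remaining, empty committee and unit budgets, some
sequence of steps ends with no candidate remaining and committee `W`. -/
def IsSTVOutcome (P : N → WeakOrder C) (q : ℝ) (W : Finset C) : Prop :=
  ∃ b : N → ℝ,
    Relation.ReflTransGen (STVStep P q) ⟨Finset.univ, ∅, fun _ => 1⟩ ⟨∅, W, b⟩

/-- The closure of `T` with respect to the voter group `S`. -/
noncomputable def closureSet (P : N → WeakOrder C) (S : Finset N) (T : Finset C) :
    Finset C :=
  Finset.univ.filter fun c => ∃ i ∈ S, ∃ t ∈ T, (P i).rel c t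

end STV

/-- A weak order is `T`-supporting if every member of `T` is ranked weakly above
every non-member. -/
def IsTSupporting {C : Type*} (w : WeakOrder C) (T : Finset C) : Prop :=
  ∀ t ∈ T, ∀ c, c ∉ T → w.rel t c

-- The next two lemmas are stated without `[Fintype C]`, so that the decidability instances are
-- those of the definitions of `topSet` and `lowest`.
lemma WeakOrder.mem_topSet {C : Type*} (w : WeakOrder C) (A : Finset C) (c : C) :
    c ∈ w.topSet A ↔ c ∈ A ∧ ∀ d ∈ A, w.rel c d := by
  unfold WeakOrder.topSet
  exact Finset.mem_filter

lemma mem_lowest {C N : Type*} [DecidableEq C] [Fintype N] (s : List ℕ → ℕ → ℝ)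
    (P : N → WeakOrder C) (A : Finset C) (c : C) :
    c ∈ lowest s P A ↔ c ∈ A ∧ ∀ d ∈ A, totalScore s P A c ≤ totalScore s P A d := by
  unfold lowest
  exact Finset.mem_filter

/-- If `c` and `d` both remain and a voter has `c` on top of the remaining candidates but `d`
strictly below it, then that voter gives one point to `c`: the order has at least two classes. -/
lemma approvalScoring_top_eq_one {C : Type*} [DecidableEq C] (w : WeakOrder C) (A : Finset C)
    {c d : C} (hc : c ∈ A) (hd : d ∈ A) (htop : ∀ x ∈ A, w.rel c x) (hcd : w.strict c d) :
    approvalScoring (w.orderType A) (w.classIdx A c) = 1 := by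
  have hempty : (A.filter fun b => w.strict b c) = ∅ :=
    Finset.filter_eq_empty_iff.2 fun x hx h => h.2 (htop x hx)
  have hidx : w.classIdx A c = 0 := by simp [WeakOrder.classIdx, hempty]
  have hc0 : w.cardAbove A c = 0 := by simp [WeakOrder.cardAbove, hempty]
  have hd0 : 0 < w.cardAbove A d :=
    Finset.card_pos.2 ⟨c, Finset.mem_filter.2 ⟨hc, hcd⟩⟩
  have hlen : 2 ≤ (w.orderType A).length := by
    simp only [WeakOrder.orderType, List.length_map, List.length_range, WeakOrder.numClasses]
    exact Finset.one_lt_card.2 ⟨_, Finset.mem_image_of_mem _ hc, _,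
      Finset.mem_image_of_mem _ hd, by omega⟩
  simp [approvalScoring, hidx, hlen]

lemma approvalScoring_below_eq_zero {C : Type*} [DecidableEq C] (w : WeakOrder C) (A : Finset C)
    {c d : C} (hc : c ∈ A) (hcd : w.strict c d) :
    approvalScoring (w.orderType A) (w.classIdx A d) = 0 := by
  have hidx : w.classIdx A d ≠ 0 := (Finset.card_pos.2
    ⟨_, Finset.mem_image_of_mem _ (Finset.mem_filter.2 ⟨hc, hcd⟩)⟩).ne'
  simp [approvalScoring, hidx]

/-- A candidate `d` strictly below `c` for every member of a majority that puts `c` on top scores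
strictly less than `c`: `c` gets at least `|S|` points and `d` at most `n - |S|`. -/
lemma totalScore_lt_of_majority {C N : Type*} [DecidableEq C] [Fintype N]
    (P : N → WeakOrder C) (S : Finset N) (hmaj : Fintype.card N < 2 * S.card)
    (A : Finset C) {c d : C} (hc : c ∈ A) (hd : d ∈ A)
    (htop : ∀ i ∈ S, ∀ x ∈ A, (P i).rel c x) (hcd : ∀ i ∈ S, (P i).strict c d) :
    totalScore approvalScoring P A d < totalScore approvalScoring P A c := by
  have hnn : ∀ τ j, 0 ≤ approvalScoring τ j := fun τ j => by
    unfold approvalScoring; split_ifs <;> norm_num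
  have hle : ∀ τ j, approvalScoring τ j ≤ 1 := fun τ j => by
    unfold approvalScoring; split_ifs <;> norm_num
  have h1 : (S.card : ℝ) ≤ totalScore approvalScoring P A c := by
    calc (S.card : ℝ) = ∑ i ∈ S, approvalScoring ((P i).orderType A) ((P i).classIdx A c) := by
          rw [Finset.sum_congr rfl fun i hi =>
            approvalScoring_top_eq_one (P i) A hc hd (htop i hi) (hcd i hi)]
          simp
      _ ≤ _ := Finset.sum_le_sum_of_subset_of_nonneg (Finset.subset_univ S)
          fun i _ _ => hnn _ _
  have h2 : totalScore approvalScoring P A d ≤ ((Sᶜ).card : ℝ) := by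
    unfold totalScore
    rw [← Finset.sum_add_sum_compl S, Finset.sum_congr rfl fun i hi =>
      approvalScoring_below_eq_zero (P i) A hc (hcd i hi)]
    calc _ ≤ ∑ i ∈ S, (0 : ℝ) + ∑ i ∈ Sᶜ, (1 : ℝ) :=
          add_le_add le_rfl (Finset.sum_le_sum fun i _ => hle _ _)
      _ = _ := by simp
  have h3 : (Sᶜ).card < S.card := by
    have := Finset.card_add_card_compl S
    omega
  have h4 : ((Sᶜ).card : ℝ) < S.card := by exact_mod_cast h3
  linarith

lemma winnersAux_subset {C N : Type*} [DecidableEq C] [Fintype N] (s : List ℕ → ℕ → ℝ)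
    (P : N → WeakOrder C) (k : ℕ) (A : Finset C) : winnersAux s P k A ⊆ A := by
  induction k generalizing A with
  | zero => exact Finset.Subset.refl _
  | succ k ih =>
    unfold winnersAux
    split_ifs
    · exact Finset.Subset.refl _
    · exact Finset.biUnion_subset.2 fun c _ => (ih _).trans (Finset.erase_subset _ _)

/-- The elimination argument: as long as the common top candidate `c` remains, all winners of the
remaining process are top candidates of members of `S`. The hypothesis `A.card ≤ k` says that the
fuel suffices to run the process to the end. -/
lemma winnersAux_subset_tops {C N : Type*} [Fintype C] [DecidableEq C] [Fintype N]
    (P : N → WeakOrder C) (S : Finset N) (hmaj : Fintype.card N < 2 * S.card)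
    {c : C} (htop : ∀ i ∈ S, ∀ x, (P i).rel c x) (k : ℕ) (A : Finset C)
    (hk : A.card ≤ k) (hc : c ∈ A) :
    ∀ w ∈ winnersAux approvalScoring P k A, ∃ i ∈ S, ∀ x, (P i).rel w x := by
  induction k generalizing A with
  | zero => exact absurd (Finset.card_pos.2 ⟨c, hc⟩) (by omega)
  | succ k ih =>
    intro w hw
    unfold winnersAux at hw
    split_ifs at hw with hcard
    · obtain rfl : w = c := Finset.card_le_one.1 hcard w hw c hc
      obtain ⟨i, hi⟩ : S.Nonempty := Finset.card_pos.1 (by omega)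
      exact ⟨i, hi, htop i hi⟩
    · obtain ⟨e, he, hw⟩ := Finset.mem_biUnion.1 hw
      obtain ⟨heA, hmin⟩ := (mem_lowest _ _ _ _).1 he
      have hwA : w ∈ A := Finset.mem_of_mem_erase (winnersAux_subset _ _ _ _ hw)
      by_cases hec : e = c
      · -- `c` itself is eliminated, so no remaining candidate scores less than `c`.
        subst hec
        by_contra! hno
        refine absurd (hmin w hwA) (not_le.2 (totalScore_lt_of_majority P S hmaj A hc hwA
          (fun i hi x _ => htop i hi x) fun i hi => ⟨htop i hi w, fun hwe => ?_⟩))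
        obtain ⟨x, hx⟩ := hno i hi
        exact hx ((P i).trans _ _ _ hwe (htop i hi x))
      · refine ih (A.erase e) ?_ (Finset.mem_erase.2 ⟨Ne.symm hec, hc⟩) w hw
        rw [Finset.card_erase_of_mem heA]
        omega

/-- Approval-IRV respects cohesive majorities: if a set `S` of
more than half of the voters all rank some common candidate in their top
indifference class, then every Approval-IRV winner is a top candidate of some
voter in `S`. -/
theorem approvalIRV_respects_cohesive_majorities
    {C N : Type*} [Fintype C] [DecidableEq C] [Fintype N]
    (P : N → WeakOrder C) (S : Finset N)
    (hmaj : Fintype.card N < 2 * S.card)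
    (hcoh : ∃ c, ∀ i ∈ S, c ∈ (P i).topSet Finset.univ) :
    winners approvalScoring P Finset.univ ⊆
      S.biUnion fun i => (P i).topSet Finset.univ := by
  obtain ⟨c, hc⟩ := hcoh
  have htop : ∀ i ∈ S, ∀ x, (P i).rel c x := fun i hi x =>
    ((WeakOrder.mem_topSet _ _ _).1 (hc i hi)).2 x (Finset.mem_univ x)
  intro w hw
  obtain ⟨i, hi, h⟩ :=
    winnersAux_subset_tops P S hmaj htop _ _ le_rfl (Finset.mem_univ c) w hw
  exact Finset.mem_biUnion.2
    ⟨i, hi, (WeakOrder.mem_topSet _ _ _).2 ⟨Finset.mem_univ w, fun x _ => h x⟩⟩
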